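/- Suppose μ = μ' ∪ μ'' where μ' and μ'' are nonempty partitions; let k = #μ' and p = |μ'|, and assume μ' is superior to μ''. Then the following identities hold whenever the collapse on the left-hand side is defined (the collapses on the right are then also defined); moreover, in any identity whose right-hand side contains μ'⁻ and μ''⁺ one additionally assumes μ' is superior to μ''⁺. (k even, p even): μ_B = (μ')_D ∪ (μ'')_B, μ_C = (μ')_C ∪ (μ'')_C, μ_D = (μ')_D ∪ (μ'')_D. (k even, p odd): μ_B = (μ'⁻)_D ∪ (μ''⁺)_B, μ_C = (μ'⁻)_C ∪ (μ''⁺)_C, μ_D = (μ'⁻)_D ∪ (μ''⁺)_D. (k odd, p even): μ_B = (μ'⁻)_B ∪ (μ''⁺)_D, μ_C = (μ')_C ∪ (μ'')_C, μ_D = (μ'⁻)_B ∪ (μ''⁺)_B. (k odd, p odd): μ_B = (μ')_B ∪ (μ'')_D, μ_C = (μ'⁻)_C ∪ (μ''⁺)_C, μ_D = (μ')_B ∪ (μ'')_B. -/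

import Mathlib

namespace NilDual

/-- A "partition" is encoded as a multiset of natural numbers (its parts). -/
abbrev Ptn := Multiset ℕ

/-- All parts are positive. -/
def IsPartition (l : Ptn) : Prop := ∀ a ∈ l, 0 < a

/-- `height l a` is the number of parts of `l` that are ≥ `a`. -/
def height (l : Ptn) (a : ℕ) : ℕ := Multiset.card (l.filter (fun p => a ≤ p))

/-- `psum l j` is the sum of the `j` largest parts of `l`. -/
def psum (l : Ptn) (j : ℕ) : ℕ := ∑ a ∈ Finset.Icc 1 l.sum, min j (height l a)

/-- `Dom l m` means `l ≤ m` in the dominance order. -/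
def Dom (l m : Ptn) : Prop := ∀ j : ℕ, psum l j ≤ psum m j

/-- The transpose (conjugate) partition. -/
def transpose (l : Ptn) : Ptn :=
  Multiset.filter (fun x => 0 < x)
    (Multiset.map (fun a => height l a) (Finset.Icc 1 l.sum).val)

/-- The largest part (0 for the empty partition). -/
def maxPart (l : Ptn) : ℕ := l.sup

/-- The smallest part (0 for the empty partition). -/
noncomputable def minPart (l : Ptn) : ℕ := sInf {a : ℕ | a ∈ l}

/-- `λ⁺`: add 1 to the largest part. -/
def up (l : Ptn) : Ptn := (maxPart l + 1) ::ₘ l.erase (maxPart l)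

/-- `λ⁻`: subtract 1 from the smallest part, deleting it if it becomes 0. -/
noncomputable def down (l : Ptn) : Ptn :=
  if minPart l ≤ 1 then l.erase (minPart l)
  else (minPart l - 1) ::ₘ l.erase (minPart l)

/-- The join `λ ∨ μ = (λ* ∪ μ*)*`. -/
def pjoin (l m : Ptn) : Ptn := transpose (transpose l + transpose m)

/-- `λ₋ = (λ*⁻)*`. -/
noncomputable def lowerStar (l : Ptn) : Ptn := transpose (down (transpose l))

inductive PType | B | C | D
deriving DecidableEq

/-- Parts of this parity must occur with even multiplicity in a partition of type `X`. -/
def badPart : PType → ℕ → Prop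
  | PType.B, a => Even a
  | PType.C, a => Odd a
  | PType.D, a => Even a

/-- Membership in `𝒫_X` (sum unconstrained). -/
def InP (X : PType) (l : Ptn) : Prop :=
  IsPartition l ∧ ∀ a : ℕ, badPart X a → Even (l.count a)

/-- The parity of `n` required for `𝒫_X(n)` to be defined. -/
def sumParity : PType → ℕ → Prop
  | PType.B, n => Odd n
  | PType.C, n => Even n
  | PType.D, n => Even n

/-- `m` is the X-collapse of `l`: `m ∈ 𝒫_X(|l|)`, `m ≤ l` in dominance order, and `m`
dominates every member of `𝒫_X(|l|)` that is dominated by `l`. -/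
def IsCollapse (X : PType) (l m : Ptn) : Prop :=
  InP X m ∧ m.sum = l.sum ∧ Dom m l ∧
    ∀ ν : Ptn, InP X ν → ν.sum = l.sum → Dom ν l → Dom ν m

def CollapseDefined (X : PType) (l : Ptn) : Prop := ∃ m, IsCollapse X l m

open Classical in
/-- The X-collapse `λ_X` (junk value `0` if it does not exist). -/
noncomputable def collapse (X : PType) (l : Ptn) : Ptn :=
  if h : CollapseDefined X l then h.choose else 0

/-- `l` is superior to `m`: smallest part of `l` ≥ largest part of `m`. -/
def Superior (l m : Ptn) : Prop := maxPart m ≤ minPart l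

def EvenlySuperior (l m : Ptn) : Prop := ∃ k : ℕ, Even k ∧ maxPart m ≤ k ∧ k ≤ minPart l

def OddlySuperior (l m : Ptn) : Prop := ∃ k : ℕ, Odd k ∧ maxPart m ≤ k ∧ k ≤ minPart l

/-- The parity required of marked parts in type `X`. -/
def markParity : PType → ℕ → Prop
  | PType.C, a => Even a
  | _, a => Odd a

/-- `(ν, η)` is a marked partition of type `X`, with underlying partition `λ = ν + η`. -/
def IsMarked (X : PType) (nu eta : Ptn) : Prop :=
  InP X (nu + eta) ∧ sumParity X (nu + eta).sum ∧
  (∀ a ∈ nu, nu.count a = 1 ∧ markParity X a) ∧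
  ((X = PType.B ∨ X = PType.D) → Even (Multiset.card nu))

/-- The Sommers duality map `d_S` on marked partitions `(ν, η)`. -/
noncomputable def dS (X : PType) (nu eta : Ptn) : Ptn :=
  match X with
  | PType.B => collapse PType.C (transpose (nu + collapse PType.C (down eta)))
  | PType.C => collapse PType.B (transpose (nu + collapse PType.B (up eta)))
  | PType.D =>
      collapse PType.D (transpose (nu + transpose (collapse PType.D (transpose eta))))

/-- `a` is a markable part of `l` in type `X`. -/
def Markable (X : PType) (l : Ptn) (a : ℕ) : Prop :=
  a ∈ l ∧ markParity X a ∧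
    (match X with
     | PType.B => Odd (height l a)
     | PType.C => Even (height l a)
     | PType.D => Even (height l a))

/-- The marked partition `⟨l, ν⟩` is reduced. -/
def Reduced (X : PType) (l nu : Ptn) : Prop := ∀ a ∈ nu, Markable X l a

/-- The parts entering the definition of a special marked partition:
even of odd height (B), odd of even height (C), even of even height (D). -/
def AntiPart (X : PType) (l : Ptn) (a : ℕ) : Prop :=
  match X with
  | PType.B => Even a ∧ Odd (height l a)
  | PType.C => Odd a ∧ Even (height l a)
  | PType.D => Even a ∧ Even (height l a)

/-- The reduced marked partition `⟨l, ν⟩` is special. -/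
def SpecialMP (X : PType) (l nu : Ptn) : Prop :=
  ∀ a ∈ l, AntiPart X l a → Even (height nu a)

/-- `a` is the largest part of `l` whose height satisfies `P`. -/
def LargestWith (l : Ptn) (P : ℕ → Prop) (a : ℕ) : Prop :=
  a ∈ l ∧ P (height l a) ∧ ∀ b ∈ l, P (height l b) → b ≤ a

/-- Height parity for the top marked part in a basic block. -/
def heightParity : PType → ℕ → Prop
  | PType.B => fun n => Odd n
  | _ => fun n => Even n

/-- A basic block of type `X`. -/
def BasicBlock (X : PType) (nu eta : Ptn) : Prop :=
  IsMarked X nu eta ∧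
  ((∃ n1 n2 : ℕ, n1 < n2 ∧ nu = {n2, n1} ∧ n1 = minPart (nu + eta) ∧
      LargestWith (nu + eta) (heightParity X) n2) ∨
   (X = PType.C ∧ ∃ n2 : ℕ, nu = {n2} ∧ LargestWith (nu + eta) (heightParity X) n2))

/-- An ultrabasic block: a basic block with `n₁ ≤ 1`. -/
def Ultrabasic (X : PType) (nu eta : Ptn) : Prop :=
  BasicBlock X nu eta ∧ (Multiset.card nu = 2 → minPart nu ≤ 1)


/-!
Adding `1` to every part (infinitely many zeros included) in types `B` and `D`, and nothing in
type `C`, turns `𝒫_X` into the set of partitions whose odd parts have even multiplicity. In terms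
of the concave sequence `σ` of partial sums this says that `σ` is even at each of its corners, so
the collapse is the largest concave sequence with even corners below `σ`. It is given by the local
formula `j ↦ max (2⌊σ_j / 2⌋) (⌊σ_{j-1} / 2⌋ + ⌊σ_{j+1} / 2⌋)`, which depends on the halves
`⌊σ_j / 2⌋` only. For a union with `μ'` superior to `μ''`, `σ` is the concatenation of the two
sequences at index `k`. If `σ_k` is even, the halves are concatenated as well, and hence so are the
collapses. If `σ_k` is odd, passing to `μ'⁻` and `μ''⁺` makes it even without changing any half.
-/

/-! ### Concave sequences with even corners -/

/-- Concavity of a sequence, as satisfied by the partial sums of a partition. -/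
def DiscreteConcave (T : ℕ → ℕ) : Prop := ∀ j, T j + T (j + 2) ≤ 2 * T (j + 1)

/-- `T` takes even values wherever its slope drops strictly. For the shifted partial sums of a
partition this is membership in `𝒫_X`. -/
def EvenCorners (T : ℕ → ℕ) : Prop :=
  ∀ j, T j + T (j + 2) < 2 * T (j + 1) → Even (T (j + 1))

/-- The largest concave sequence with even corners and even initial value below a concave
sequence `T`. At index `0` only the first term of the maximum makes sense. -/
def evenCollapse (T : ℕ → ℕ) : ℕ → ℕ
  | 0 => 2 * (T 0 / 2)
  | j + 1 => max (2 * (T (j + 1) / 2)) (T j / 2 + T (j + 2) / 2)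

/-- The sequence following `S` up to index `k` and then continuing with the increments of `T`.
Partial sums of a union of partitions arise in this way. -/
def concat (k : ℕ) (S T : ℕ → ℕ) (j : ℕ) : ℕ := S (min j k) + T (j - k)

section DiscreteConcave

variable {S T U : ℕ → ℕ} {e j k : ℕ}

lemma DiscreteConcave.add_le_succ (hT : DiscreteConcave T) {N : ℕ}
    (hN : ∀ j, N ≤ j → T (j + 1) = T j + e) (j : ℕ) : T j + e ≤ T (j + 1) := by
  by_contra! hlt
  have slope_lt : ∀ i, j ≤ i → T (i + 1) < T i + e := fun i hi => by
    induction i, hi using Nat.le_induction with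
    | base => exact hlt
    | succ i _ ih => linarith [hT i]
  exact (slope_lt _ (le_max_left j N)).ne (hN _ (le_max_right j N))

lemma evenCollapse_le (hT : DiscreteConcave T) (j : ℕ) : evenCollapse T j ≤ T j := by
  cases j with
  | zero => simp only [evenCollapse]; omega
  | succ j => have := hT j; simp only [evenCollapse]; omega

lemma evenCollapse_of_even (hT : DiscreteConcave T) (hj : Even (T j)) :
    evenCollapse T j = T j := by
  rw [Nat.even_iff] at hj
  cases j with
  | zero => simp only [evenCollapse]; omega
  | succ j => have := hT j; simp only [evenCollapse]; omega

lemma evenCollapse_succ_of_corner (h : T j + T (j + 2) < 2 * T (j + 1)) :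
    evenCollapse T (j + 1) = 2 * (T (j + 1) / 2) := by
  simp only [evenCollapse]; omega

lemma evenCollapse_succ_of_linear (h : T j + T (j + 2) = 2 * T (j + 1))
    (heven : Even (T j) ∨ Even (T (j + 1))) : evenCollapse T (j + 1) = T (j + 1) := by
  simp only [Nat.even_iff] at heven
  simp only [evenCollapse]; omega

lemma evenCollapse_succ_eq_or (hT : DiscreteConcave T) (j : ℕ) :
    evenCollapse T (j + 1) = 2 * (T (j + 1) / 2) ∨
      Even (T j) ∧ Even (T (j + 2)) ∧ T j + T (j + 2) = 2 * T (j + 1) := by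
  have := hT j
  simp only [evenCollapse, Nat.even_iff]
  omega

lemma evenCollapse_succ_of_odd (hT : DiscreteConcave T) (hj : Odd (T j)) :
    evenCollapse T (j + 1) = 2 * (T (j + 1) / 2) :=
  (evenCollapse_succ_eq_or hT j).resolve_right fun h => Nat.not_even_iff_odd.2 hj h.1

lemma evenCollapse_of_odd_succ (hT : DiscreteConcave T) (hj : Odd (T (j + 1))) :
    evenCollapse T j = 2 * (T j / 2) := by
  cases j with
  | zero => rfl
  | succ i =>
    exact (evenCollapse_succ_eq_or hT i).resolve_right fun h => Nat.not_even_iff_odd.2 hj h.2.1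

lemma DiscreteConcave.evenCollapse (hT : DiscreteConcave T) :
    DiscreteConcave (evenCollapse T) := by
  intro j
  rcases Nat.even_or_odd (T (j + 1)) with heven | hodd
  · rw [evenCollapse_of_even hT heven]
    exact (add_le_add (evenCollapse_le hT j) (evenCollapse_le hT (j + 2))).trans (hT j)
  · rw [evenCollapse_of_odd_succ hT hodd, evenCollapse_succ_of_odd hT hodd, ← mul_add]
    exact Nat.mul_le_mul_left 2 (le_max_right _ _)

lemma evenCorners_evenCollapse (hT : DiscreteConcave T) : EvenCorners (evenCollapse T) := by
  intro j hcorner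
  rcases evenCollapse_succ_eq_or hT j with heq | ⟨even_left, even_right, linear⟩
  · exact heq ▸ even_two_mul _
  · rw [evenCollapse_of_even hT even_left, evenCollapse_of_even hT even_right, linear] at hcorner
    exact absurd (evenCollapse_le hT (j + 1)) (by omega)

lemma EvenCorners.linear_of_odd (hU : EvenCorners U) (hconc : DiscreteConcave U)
    (hodd : Odd (U (j + 1))) : U j + U (j + 2) = 2 * U (j + 1) :=
  (hconc j).antisymm (not_lt.1 fun hlt => Nat.not_even_iff_odd.2 hodd (hU j hlt))

-- Two consecutive odd values would propagate down to index `0` along a line without corners.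
lemma EvenCorners.even_of_odd_succ (hU : EvenCorners U) (hconc : DiscreteConcave U)
    (h0 : Even (U 0)) (hodd : Odd (U (j + 1))) : Even (U j) := by
  induction j with
  | zero => exact h0
  | succ j ih =>
    by_contra hj
    rw [Nat.not_even_iff_odd] at hj
    have linear := hU.linear_of_odd hconc hj
    have hsum : Odd (U j + U (j + 2)) := (ih hj).add_odd hodd
    exact Nat.not_odd_iff_even.2 (even_two_mul _) (linear ▸ hsum)

lemma EvenCorners.le_evenCollapse (hU : EvenCorners U) (hconc : DiscreteConcave U)
    (h0 : Even (U 0)) (hle : ∀ j, U j ≤ T j) (j : ℕ) : U j ≤ evenCollapse T j := by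
  have hj := hle j
  rcases Nat.even_or_odd (U j) with heven | hodd
  · rw [Nat.even_iff] at heven
    cases j <;> simp only [evenCollapse] <;> omega
  · cases j with
    | zero => exact absurd h0 (Nat.not_even_iff_odd.2 hodd)
    | succ j =>
      have linear := hU.linear_of_odd hconc hodd
      have even_left := Nat.even_iff.1 (hU.even_of_odd_succ hconc h0 hodd)
      have := hle j
      have := hle (j + 2)
      simp only [evenCollapse]
      omega

lemma concat_of_le (h0 : T 0 = 0) (hj : j ≤ k) : concat k S T j = S j := by
  simp [concat, hj, h0]

lemma concat_add (j : ℕ) : concat k S T (k + j) = S k + T j := by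
  simp [concat]

lemma concat_mul_left (e k j : ℕ) : concat k (e * ·) (e * ·) j = e * j := by
  rw [concat, ← mul_add]
  congr 1
  omega

lemma concat_div_two (hk : Even (S k)) (h0 : T 0 = 0) (j : ℕ) :
    concat k S T j / 2 = concat k (S · / 2) (T · / 2) j := by
  rw [Nat.even_iff] at hk
  rcases le_total j k with hj | hj
  · rw [concat_of_le h0 hj, concat_of_le (by simp [h0]) hj]
  · obtain ⟨i, rfl⟩ := Nat.exists_eq_add_of_le hj
    rw [concat_add, concat_add]
    omega

lemma concat_div_two_of_move {S' T' : ℕ → ℕ} (hk : Even (S' k)) (h0 : T 0 = 0)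
    (hS : ∀ j, S' j + (if k ≤ j then 1 else 0) = S j) (hT : ∀ j, T' j = T j + min j 1) (j : ℕ) :
    concat k S T j / 2 = concat k (S' · / 2) (T' · / 2) j := by
  rw [Nat.even_iff] at hk
  rcases lt_or_ge j k with hj | hj
  · rw [concat_of_le h0 hj.le, concat_of_le (by simp [hT, h0]) hj.le, ← hS, if_neg hj.not_ge,
      add_zero]
  · obtain ⟨i, rfl⟩ := Nat.exists_eq_add_of_le hj
    rw [concat_add, concat_add, hT, ← hS, if_pos le_rfl]
    rcases Nat.eq_zero_or_pos i with rfl | hi <;> omega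

-- `evenCollapse` is local and sees only the halves, so the junction at `k` is the only issue.
lemma evenCollapse_eq_concat (hS : DiscreteConcave S) (hk : Even (S k)) (h0 : T 0 = 0)
    (hhalf : ∀ j, U j / 2 = concat k (S · / 2) (T · / 2) j)
    (hjoin : evenCollapse U k = 2 * (U k / 2)) :
    evenCollapse U = concat k (evenCollapse S) (evenCollapse T) := by
  have h0' : evenCollapse T 0 = 0 := by simp [evenCollapse, h0]
  have half_left {j : ℕ} (hj : j ≤ k) : U j / 2 = S j / 2 := by
    rw [hhalf, concat_of_le (by simp [h0]) hj]
  have half_right (j : ℕ) : U (k + j) / 2 = S k / 2 + T j / 2 := by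
    rw [hhalf, concat_add]
  have join : evenCollapse U k = evenCollapse S k := by
    rw [hjoin, half_left le_rfl, evenCollapse_of_even hS hk, Nat.two_mul_div_two_of_even hk]
  funext j
  rcases lt_trichotomy j k with hj | rfl | hj
  · rw [concat_of_le h0' hj.le]
    cases j with
    | zero => simp only [evenCollapse, half_left hj.le]
    | succ i =>
      simp only [evenCollapse, half_left hj.le, half_left (show i ≤ k by omega),
        half_left (show i + 2 ≤ k by omega)]
  · rw [concat_of_le h0' le_rfl, join]
  · obtain ⟨i, rfl⟩ := Nat.exists_eq_add_of_lt hj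
    rw [add_assoc, concat_add, evenCollapse_of_even hS hk]
    have := Nat.two_mul_div_two_of_even hk
    have h₀ := half_right i
    have h₁ := half_right (i + 1)
    have h₂ := half_right (i + 2)
    simp only [← add_assoc] at h₁ h₂ ⊢
    simp only [evenCollapse, h₀, h₁, h₂]
    omega

end DiscreteConcave

/-! ### Heights and partial sums -/

section Psum

variable {l m : Ptn} {a j k : ℕ}

lemma height_cons (x : ℕ) (l : Ptn) (a : ℕ) :
    height (x ::ₘ l) a = height l a + if a ≤ x then 1 else 0 := by
  by_cases h : a ≤ x <;> simp [height, h]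

lemma height_add (l m : Ptn) (a : ℕ) : height (l + m) a = height l a + height m a := by
  simp [height]

lemma height_antitone (l : Ptn) : Antitone (height l) := fun _ _ hab =>
  Multiset.card_le_card (Multiset.monotone_filter_right l fun _ hb => hab.trans hb)

lemma height_le_card (l : Ptn) (a : ℕ) : height l a ≤ l.card :=
  Multiset.card_le_card (Multiset.filter_le _ _)

lemma height_eq_card (h : ∀ x ∈ l, a ≤ x) : height l a = l.card := by
  rw [height, Multiset.filter_eq_self.2 h]

lemma height_eq_zero (h : ∀ x ∈ l, x < a) : height l a = 0 := by
  rw [height, Multiset.filter_eq_nil.2 fun x hx => not_le.2 (h x hx), Multiset.card_zero]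

lemma le_sum_of_height_pos (h : 0 < height l a) : a ≤ l.sum := by
  by_contra! hlt
  exact h.ne' (height_eq_zero fun x hx => (Multiset.le_sum_of_mem hx).trans_lt hlt)

lemma height_eq_add_count (l : Ptn) (a : ℕ) : height l a = height l (a + 1) + l.count a := by
  induction l using Multiset.induction_on with
  | empty => simp [height]
  | cons x l ih =>
    rw [height_cons, height_cons, Multiset.count_cons, ih]
    split_ifs <;> omega

lemma eq_of_height_eq (hl : IsPartition l) (hm : IsPartition m)
    (h : ∀ a, 0 < a → height l a = height m a) : l = m := by
  ext a
  rcases Nat.eq_zero_or_pos a with rfl | ha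
  · rw [Multiset.count_eq_zero_of_notMem fun h0 => (hl 0 h0).false,
      Multiset.count_eq_zero_of_notMem fun h0 => (hm 0 h0).false]
  · have := height_eq_add_count l a
    have := height_eq_add_count m a
    have := h a ha
    have := h (a + 1) a.succ_pos
    omega

lemma sum_Icc_ite_le {N x : ℕ} (hx : x ≤ N) (c : ℕ) :
    ∑ a ∈ Finset.Icc 1 N, (if a ≤ x then c else 0) = x * c := by
  have : (Finset.Icc 1 N).filter (· ≤ x) = Finset.Icc 1 x := by
    ext a
    simp only [Finset.mem_filter, Finset.mem_Icc]
    omega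
  rw [← Finset.sum_filter, this, Finset.sum_const, Nat.card_Icc, Nat.add_sub_cancel, smul_eq_mul]

lemma sum_Icc_height {N : ℕ} (h : ∀ x ∈ l, x ≤ N) :
    ∑ a ∈ Finset.Icc 1 N, height l a = l.sum := by
  induction l using Multiset.induction_on with
  | empty => simp [height]
  | cons x l ih =>
    simp only [height_cons, Finset.sum_add_distrib]
    rw [ih fun y hy => h y (Multiset.mem_cons_of_mem hy),
      sum_Icc_ite_le (h x (Multiset.mem_cons_self x l)), Multiset.sum_cons, mul_one, add_comm]

lemma psum_eq_sum_Icc {N : ℕ} (h : ∀ x ∈ l, x ≤ N) (j : ℕ) :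
    psum l j = ∑ a ∈ Finset.Icc 1 N, min j (height l a) := by
  have extend {M M' : ℕ} (hM : ∀ x ∈ l, x ≤ M) (hMM' : M ≤ M') :
      ∑ a ∈ Finset.Icc 1 M, min j (height l a) = ∑ a ∈ Finset.Icc 1 M', min j (height l a) := by
    refine Finset.sum_subset (Finset.Icc_subset_Icc_right hMM') fun a ha ha' => ?_
    have hMa : M < a := by
      rw [Finset.mem_Icc] at ha ha'
      omega
    rw [height_eq_zero fun x hx => (hM x hx).trans_lt hMa, Nat.min_zero]
  exact (extend (fun _ hx => Multiset.le_sum_of_mem hx) (le_max_left _ _)).trans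
    (extend h (le_max_right _ _)).symm

lemma psum_zero (l : Ptn) : psum l 0 = 0 := by simp [psum]

lemma psum_le_sum (l : Ptn) (j : ℕ) : psum l j ≤ l.sum := by
  rw [← sum_Icc_height (l := l) fun _ hx => Multiset.le_sum_of_mem hx]
  exact Finset.sum_le_sum fun _ _ => min_le_right _ _

lemma psum_of_card_le (h : l.card ≤ j) : psum l j = l.sum := by
  rw [← sum_Icc_height (l := l) fun _ hx => Multiset.le_sum_of_mem hx]
  exact Finset.sum_congr rfl fun a _ => min_eq_right ((height_le_card l a).trans h)

/-- The `(j + 1)`-st largest part of `l`, or `0` if there are at most `j` parts. It is computed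
from the heights in the same way as `psum`. -/
def nthPart (l : Ptn) (j : ℕ) : ℕ := ((Finset.Icc 1 l.sum).filter (j < height l ·)).card

lemma psum_succ (l : Ptn) (j : ℕ) : psum l (j + 1) = psum l j + nthPart l j := by
  rw [psum, psum, nthPart, Finset.card_filter, ← Finset.sum_add_distrib]
  refine Finset.sum_congr rfl fun a _ => ?_
  split_ifs <;> omega

lemma le_nthPart_iff (ha : 0 < a) : a ≤ nthPart l j ↔ j < height l a := by
  constructor
  · contrapose!
    intro hj
    have hsub : {b ∈ Finset.Icc 1 l.sum | j < height l b} ⊆ Finset.Icc 1 (a - 1) := fun b hb => by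
      obtain ⟨hb, hjb⟩ := Finset.mem_filter.1 hb
      have : b < a := (height_antitone l).reflect_lt (hj.trans_lt hjb)
      rw [Finset.mem_Icc] at hb ⊢
      omega
    calc nthPart l j ≤ (Finset.Icc 1 (a - 1)).card := Finset.card_le_card hsub
      _ < a := by rw [Nat.card_Icc]; omega
  · intro hj
    have hsub : Finset.Icc 1 a ⊆ {b ∈ Finset.Icc 1 l.sum | j < height l b} := fun b hb => by
      obtain ⟨hb₁, hba⟩ := Finset.mem_Icc.1 hb
      have hjb : j < height l b := hj.trans_le (height_antitone l hba)
      exact Finset.mem_filter.2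
        ⟨Finset.mem_Icc.2 ⟨hb₁, le_sum_of_height_pos (Nat.zero_lt_of_lt hjb)⟩, hjb⟩
    calc a = (Finset.Icc 1 a).card := by rw [Nat.card_Icc, Nat.add_sub_cancel]
      _ ≤ nthPart l j := Finset.card_le_card hsub

lemma nthPart_succ_le (l : Ptn) (j : ℕ) : nthPart l (j + 1) ≤ nthPart l j :=
  Finset.card_le_card (Finset.monotone_filter_right _ fun _ _ h => (Nat.lt_succ_self j).trans h)

lemma psum_discreteConcave (l : Ptn) : DiscreteConcave (psum l) := fun j => by
  have := nthPart_succ_le l j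
  rw [psum_succ l (j + 1), psum_succ l j]
  omega

lemma psum_corner_iff :
    psum l j + psum l (j + 2) < 2 * psum l (j + 1) ↔ ∃ a, 0 < a ∧ height l a = j + 1 := by
  have hdrop : psum l j + psum l (j + 2) < 2 * psum l (j + 1) ↔
      nthPart l (j + 1) < nthPart l j := by
    rw [psum_succ l (j + 1), psum_succ l j]
    omega
  rw [hdrop]
  constructor
  · intro h
    have hpos : 0 < nthPart l j := by omega
    have := (le_nthPart_iff hpos).1 le_rfl
    have := mt (le_nthPart_iff hpos).2 h.not_ge
    exact ⟨nthPart l j, hpos, by omega⟩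
  · rintro ⟨a, ha, hheight⟩
    have hle : a ≤ nthPart l j := (le_nthPart_iff ha).2 (by omega)
    exact (not_le.1 (mt (le_nthPart_iff ha).1 (by omega))).trans_le hle

lemma eq_of_psum_eq (hl : IsPartition l) (hm : IsPartition m) (h : psum l = psum m) : l = m := by
  have hpart (j : ℕ) : nthPart l j = nthPart m j := by
    have hl := psum_succ l j
    rw [h, psum_succ] at hl
    exact (Nat.add_left_cancel hl).symm
  refine eq_of_height_eq hl hm fun a ha => eq_of_forall_lt_iff fun j => ?_
  rw [← le_nthPart_iff ha, ← le_nthPart_iff ha, hpart]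

lemma Dom.antisymm (hl : IsPartition l) (hm : IsPartition m) (hlm : Dom l m) (hml : Dom m l) :
    l = m :=
  eq_of_psum_eq hl hm (funext fun j => (hlm j).antisymm (hml j))

lemma exists_isPartition_nthPart_eq {f : ℕ → ℕ} (hf : Antitone f) {N : ℕ} (hN : f N = 0) :
    ∃ l, IsPartition l ∧ ∀ j, nthPart l j = f j := by
  refine ⟨((Multiset.range N).map f).filter (0 < ·), fun a ha => (Multiset.mem_filter.1 ha).2,
    fun j => eq_of_forall_le_iff fun a => ?_⟩
  rcases Nat.eq_zero_or_pos a with rfl | ha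
  · simp
  rw [le_nthPart_iff ha]
  have hheight : height (((Multiset.range N).map f).filter (0 < ·)) a =
      ((Finset.range N).filter (a ≤ f ·)).card := by
    rw [height, Multiset.filter_filter, Multiset.filter_map, Multiset.card_map, Finset.card_def]
    refine congrArg _ (Multiset.filter_congr fun i _ => ?_)
    exact and_iff_left_of_imp ha.trans_le
  rw [hheight, iff_comm]
  constructor
  · intro hj
    have hsub : Finset.range (j + 1) ⊆ {i ∈ Finset.range N | a ≤ f i} := fun i hi => by
      have hai : a ≤ f i := hj.trans (hf (Finset.mem_range_succ_iff.1 hi))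
      have hiN : i < N := not_le.1 fun hNi => by have := hf hNi; omega
      exact Finset.mem_filter.2 ⟨Finset.mem_range.2 hiN, hai⟩
    simpa using Finset.card_le_card hsub
  · contrapose!
    intro hj
    have hsub : {i ∈ Finset.range N | a ≤ f i} ⊆ Finset.range j := fun i hi =>
      Finset.mem_range.2 (hf.reflect_lt (hj.trans_le (Finset.mem_filter.1 hi).2))
    simpa using Finset.card_le_card hsub

lemma psum_height (l : Ptn) (a : ℕ) :
    psum l (height l a) = psum l (height l (a + 1)) + a * l.count a := by
  have hbound : ∀ x ∈ l, x ≤ l.sum + a := fun x hx => (Multiset.le_sum_of_mem hx).trans le_self_add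
  rw [psum_eq_sum_Icc hbound, psum_eq_sum_Icc hbound,
    ← sum_Icc_ite_le (le_add_self : a ≤ l.sum + a), ← Finset.sum_add_distrib]
  refine Finset.sum_congr rfl fun b _ => ?_
  have := height_eq_add_count l a
  split_ifs with hb
  · have := height_antitone l hb
    omega
  · have : height l b ≤ height l (a + 1) := height_antitone l (not_le.1 hb)
    omega

lemma psum_add_eq_concat
    (h : ∀ a, 0 < a → height l a = k ∨ height l a ≤ k ∧ height m a = 0) :
    psum (l + m) = concat k (psum l) (psum m) := by
  have hl : ∀ x ∈ l, x ≤ (l + m).sum := fun x hx => Multiset.le_sum_of_mem (by simp [hx])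
  have hm : ∀ x ∈ m, x ≤ (l + m).sum := fun x hx => Multiset.le_sum_of_mem (by simp [hx])
  funext j
  rw [concat, psum_eq_sum_Icc hl, psum_eq_sum_Icc hm, psum, ← Finset.sum_add_distrib]
  refine Finset.sum_congr rfl fun a ha => ?_
  have := h a (Finset.mem_Icc.1 ha).1
  rw [height_add]
  omega

lemma height_le_of_sum_le_psum (ha : 0 < a) (h : l.sum ≤ psum l k) : height l a ≤ k := by
  by_contra! hlt
  have := (le_nthPart_iff ha).2 hlt
  have := psum_succ l k
  have := psum_le_sum l (k + 1)
  omega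

lemma nthPart_zero_le_of_psum_eq_concat {n : Ptn}
    (h : psum n = concat (k + 1) (psum l) (psum m)) : nthPart m 0 ≤ nthPart l k := by
  have hm0 := psum_zero m
  have hleft : nthPart n k = nthPart l k := by
    have hn := psum_succ n k
    rw [h, concat_of_le hm0 le_rfl, concat_of_le hm0 k.le_succ, psum_succ] at hn
    exact (Nat.add_left_cancel hn).symm
  have hright : nthPart n (k + 1) = nthPart m 0 := by
    have hn := psum_succ n (k + 1)
    rw [h, concat_add, concat_of_le hm0 le_rfl, psum_succ m, hm0, zero_add] at hn
    exact (Nat.add_left_cancel hn).symm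
  exact hright ▸ hleft ▸ nthPart_succ_le n k

lemma eq_add_of_psum_eq_concat {n : Ptn} (hn : IsPartition n) (hl : IsPartition l)
    (hm : IsPartition m) (hsum : n.sum = l.sum + m.sum)
    (h : psum n = concat k (psum l) (psum m)) : n = l + m := by
  have hlk : l.sum ≤ psum l k := by
    have htotal := congrFun h (k + n.card)
    rw [concat_add, psum_of_card_le le_add_self] at htotal
    have := psum_le_sum m n.card
    omega
  refine eq_of_psum_eq hn (fun a ha => (Multiset.mem_add.1 ha).elim (hl a) (hm a)) ?_
  rw [h, psum_add_eq_concat]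
  intro a ha
  have hle := height_le_of_sum_le_psum ha hlk
  cases k with
  | zero => exact .inl (Nat.le_zero.1 hle)
  | succ i =>
    refine or_iff_not_imp_right.2 fun hma => hle.antisymm ?_
    have hm0 : a ≤ nthPart m 0 := (le_nthPart_iff ha).2 (by omega)
    exact (le_nthPart_iff ha).1 (hm0.trans (nthPart_zero_le_of_psum_eq_concat h))

end Psum

/-! ### Moving a box -/

section Boxes

variable {m : Ptn}

lemma le_maxPart {x : ℕ} (hx : x ∈ m) : x ≤ maxPart m := Multiset.le_sup hx

lemma maxPart_mem (hm : m ≠ 0) : maxPart m ∈ m := by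
  obtain ⟨x, hx⟩ := Multiset.exists_mem_of_ne_zero hm
  obtain ⟨y, hy, hsup⟩ :=
    Finset.exists_mem_eq_sup m.toFinset ⟨x, Multiset.mem_toFinset.2 hx⟩ id
  have hmax : maxPart m = y := le_antisymm
    (Multiset.sup_le.2 fun z hz =>
      (Finset.le_sup (f := id) (Multiset.mem_toFinset.2 hz)).trans hsup.le)
    (le_maxPart (Multiset.mem_toFinset.1 hy))
  exact hmax ▸ Multiset.mem_toFinset.1 hy

lemma minPart_le {x : ℕ} (hx : x ∈ m) : minPart m ≤ x := Nat.sInf_le hx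

lemma minPart_mem (hm : 0 < minPart m) : minPart m ∈ m :=
  Nat.sInf_mem (Nat.nonempty_of_pos_sInf hm)

lemma maxPart_lt_maxPart_up (m : Ptn) : maxPart m < maxPart (up m) :=
  le_maxPart (Multiset.mem_cons_self _ _)

lemma sum_up (hm : m ≠ 0) : (up m).sum = m.sum + 1 := by
  have := Multiset.sum_erase (maxPart_mem hm)
  rw [up, Multiset.sum_cons]
  omega

lemma height_up (hm : m ≠ 0) (a : ℕ) :
    height (up m) a = height m a + if a = maxPart m + 1 then 1 else 0 := by
  have hcons := height_cons (maxPart m) (m.erase (maxPart m)) a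
  rw [Multiset.cons_erase (maxPart_mem hm)] at hcons
  rw [up, height_cons, hcons]
  split_ifs <;> omega

lemma psum_up (hm : m ≠ 0) (j : ℕ) : psum (up m) j = psum m j + min j 1 := by
  set M := maxPart m + 1 with hM
  have hm_le : ∀ x ∈ m, x ≤ M := fun x hx => (le_maxPart hx).trans (Nat.le_succ _)
  have hup_le : ∀ x ∈ up m, x ≤ M := fun x hx =>
    (Multiset.mem_cons.1 hx).elim Eq.le fun hx => hm_le x (Multiset.mem_of_mem_erase hx)
  have hheight_top : height m M = 0 := height_eq_zero fun x hx => Nat.lt_succ_of_le (le_maxPart hx)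
  have hbox : ∑ a ∈ Finset.Icc 1 M, (if a = M then min j 1 else 0) = min j 1 := by
    simp [hM]
  rw [psum_eq_sum_Icc hup_le, psum_eq_sum_Icc hm_le]
  conv_rhs => rw [← hbox, ← Finset.sum_add_distrib]
  refine Finset.sum_congr rfl fun a _ => ?_
  rw [height_up hm, ← hM]
  split_ifs with ha
  · simp [ha, hheight_top]
  · rfl

lemma sum_down (hm : 0 < minPart m) : (down m).sum + 1 = m.sum := by
  have := Multiset.sum_erase (minPart_mem hm)
  rw [down]
  split_ifs
  · omega
  · rw [Multiset.sum_cons]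
    omega

lemma card_down_le (hm : 0 < minPart m) : (down m).card ≤ m.card := by
  have := Multiset.card_erase_add_one (minPart_mem hm)
  rw [down]
  split_ifs
  · omega
  · rw [Multiset.card_cons]
    omega

lemma height_down (hm : 0 < minPart m) {a : ℕ} (ha : 0 < a) :
    height (down m) a + (if a = minPart m then 1 else 0) = height m a := by
  have hcons := height_cons (minPart m) (m.erase (minPart m)) a
  rw [Multiset.cons_erase (minPart_mem hm)] at hcons
  rw [hcons, down, apply_ite (height · a), height_cons]
  split_ifs <;> omega

lemma psum_down (hm : 0 < minPart m) (j : ℕ) :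
    psum (down m) j + (if m.card ≤ j then 1 else 0) = psum m j := by
  have hbound : ∀ x ∈ m, x ≤ m.sum := fun x hx => Multiset.le_sum_of_mem hx
  have hmem : minPart m ∈ Finset.Icc 1 m.sum :=
    Finset.mem_Icc.2 ⟨hm, hbound _ (minPart_mem hm)⟩
  have hdown_le : ∀ x ∈ down m, x ≤ m.sum := fun x hx => by
    have := sum_down hm
    have := Multiset.le_sum_of_mem hx
    omega
  have hheight_min : height m (minPart m) = m.card := height_eq_card fun _ hx => minPart_le hx
  have hbox : ∑ a ∈ Finset.Icc 1 m.sum,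
      (if a = minPart m then if m.card ≤ j then 1 else 0 else 0) = if m.card ≤ j then 1 else 0 := by
    rw [Finset.sum_ite_eq', if_pos hmem]
  rw [psum_eq_sum_Icc hdown_le, psum, ← hbox, ← Finset.sum_add_distrib]
  refine Finset.sum_congr rfl fun a ha => ?_
  have hheight := height_down hm (Finset.mem_Icc.1 ha).1
  split_ifs at hheight ⊢ with hmin <;> subst_vars <;> omega

end Boxes

lemma psum_add_of_superior {l m : Ptn} (h : Superior l m) :
    psum (l + m) = concat l.card (psum l) (psum m) := by
  refine psum_add_eq_concat fun a _ => ?_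
  rcases le_or_gt a (minPart l) with ha | ha
  · exact .inl (height_eq_card fun x hx => ha.trans (minPart_le hx))
  · exact .inr ⟨height_le_card l a,
      height_eq_zero fun x hx => ((le_maxPart hx).trans h).trans_lt ha⟩

/-! ### Membership in `𝒫_X` -/

/-- The shift of the parts that makes the parts of constrained multiplicity odd in every type. -/
def PType.offset : PType → ℕ
  | .B => 1
  | .C => 0
  | .D => 1

/-- The partial sums of `l` after `X.offset` is added to every part, the infinitely many parts `0`
included. -/
def shiftedPsum (X : PType) (l : Ptn) (j : ℕ) : ℕ := psum l j + X.offset * j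

section ShiftedPsum

variable {X : PType} {l m : Ptn} {j : ℕ}

lemma badPart_iff (X : PType) (a : ℕ) : badPart X a ↔ Odd (a + X.offset) := by
  cases X <;> simp [badPart, PType.offset, Nat.odd_add_one]

lemma shiftedPsum_zero (X : PType) (l : Ptn) : shiftedPsum X l 0 = 0 := by
  simp [shiftedPsum, psum_zero]

lemma shiftedPsum_of_card_le (X : PType) (h : l.card ≤ j) :
    shiftedPsum X l j = l.sum + X.offset * j := by
  rw [shiftedPsum, psum_of_card_le h]

lemma shiftedPsum_le_iff : shiftedPsum X l j ≤ shiftedPsum X m j ↔ psum l j ≤ psum m j :=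
  Nat.add_le_add_iff_right

lemma shiftedPsum_discreteConcave (X : PType) (l : Ptn) : DiscreteConcave (shiftedPsum X l) :=
  fun j => by
    have := psum_discreteConcave l j
    simp only [shiftedPsum, mul_add]
    omega

lemma shiftedPsum_corner_iff :
    shiftedPsum X l j + shiftedPsum X l (j + 2) < 2 * shiftedPsum X l (j + 1) ↔
      ∃ a, 0 < a ∧ height l a = j + 1 := by
  rw [← psum_corner_iff]
  simp only [shiftedPsum, mul_add]
  omega

lemma shiftedPsum_height (X : PType) (l : Ptn) (a : ℕ) :
    shiftedPsum X l (height l a) =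
      shiftedPsum X l (height l (a + 1)) + l.count a * (a + X.offset) := by
  rw [shiftedPsum, shiftedPsum, psum_height, height_eq_add_count l a]
  ring

lemma shiftedPsum_add_of_superior (X : PType) (h : Superior l m) :
    shiftedPsum X (l + m) = concat l.card (shiftedPsum X l) (shiftedPsum X m) := by
  funext j
  rw [shiftedPsum, psum_add_of_superior h, ← concat_mul_left X.offset l.card]
  simp only [concat, shiftedPsum]
  omega

lemma shiftedPsum_up (X : PType) (hm : m ≠ 0) (j : ℕ) :
    shiftedPsum X (up m) j = shiftedPsum X m j + min j 1 := by
  rw [shiftedPsum, shiftedPsum, psum_up hm, add_right_comm]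

lemma shiftedPsum_down (X : PType) (hm : 0 < minPart m) (j : ℕ) :
    shiftedPsum X (down m) j + (if m.card ≤ j then 1 else 0) = shiftedPsum X m j := by
  rw [shiftedPsum, shiftedPsum, ← psum_down hm, add_right_comm]

lemma inP_iff_even_count_mul (hl : IsPartition l) :
    InP X l ↔ ∀ a, Even (l.count a * (a + X.offset)) := by
  simp only [InP, hl, true_and, badPart_iff, Nat.even_mul, ← Nat.not_even_iff_odd]
  exact forall_congr' fun a => or_iff_not_imp_right.symm

lemma inP_iff_even_shiftedPsum_height (hl : IsPartition l) :
    InP X l ↔ ∀ a, 0 < a → Even (shiftedPsum X l (height l a)) := by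
  rw [inP_iff_even_count_mul hl]
  constructor
  · intro hcount a _
    have step (d : ℕ) : Even (shiftedPsum X l (height l a)) ↔
        Even (shiftedPsum X l (height l (a + d))) := by
      induction d with
      | zero => rfl
      | succ d ih => rw [ih, shiftedPsum_height, Nat.even_add, iff_true_right (hcount _), add_assoc]
    have hzero : height l (a + l.sum + 1) = 0 :=
      height_eq_zero fun x hx => by have := Multiset.le_sum_of_mem hx; omega
    rw [step (l.sum + 1), ← add_assoc, hzero, shiftedPsum_zero]
    exact Even.zero
  · intro heven a
    rcases Nat.eq_zero_or_pos a with rfl | ha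
    · simp [Multiset.count_eq_zero_of_notMem fun h0 => (hl 0 h0).false]
    · have := heven a ha
      rw [shiftedPsum_height, Nat.even_add] at this
      exact this.1 (heven (a + 1) a.succ_pos)

lemma inP_iff_evenCorners (hl : IsPartition l) : InP X l ↔ EvenCorners (shiftedPsum X l) := by
  rw [inP_iff_even_shiftedPsum_height hl]
  constructor
  · intro heven j hcorner
    obtain ⟨a, ha, hheight⟩ := shiftedPsum_corner_iff.1 hcorner
    exact hheight ▸ heven a ha
  · intro hcorners a ha
    cases hheight : height l a with
    | zero => simp [shiftedPsum_zero]
    | succ j => exact hcorners j (shiftedPsum_corner_iff.2 ⟨a, ha, hheight⟩)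

lemma even_sum_add_of_inP (hl : InP X l) : Even (l.sum + X.offset * l.card) := by
  have := (inP_iff_even_shiftedPsum_height hl.1).1 hl 1 one_pos
  rwa [height_eq_card hl.1, shiftedPsum_of_card_le X le_rfl] at this

end ShiftedPsum

/-! ### The collapse as the even collapse of the shifted partial sums -/

section Collapse

variable {X : PType} {l c : Ptn}

lemma exists_isPartition_psum_eq {T : ℕ → ℕ} {e N : ℕ} (hT : DiscreteConcave T) (h0 : T 0 = 0)
    (hN : ∀ j, N ≤ j → T (j + 1) = T j + e) :
    ∃ l, IsPartition l ∧ ∀ j, psum l j + e * j = T j := by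
  have hslope := hT.add_le_succ hN
  have hanti : Antitone fun j => T (j + 1) - T j - e := antitone_nat_of_succ_le fun j => by
    have := hT j
    change T (j + 2) - T (j + 1) - e ≤ T (j + 1) - T j - e
    omega
  obtain ⟨l, hl, hpart⟩ :=
    exists_isPartition_nthPart_eq hanti (N := N) (by have := hN N le_rfl; omega)
  refine ⟨l, hl, fun j => ?_⟩
  induction j with
  | zero => simp [psum_zero, h0]
  | succ j ih =>
    have := hslope j
    rw [psum_succ, hpart, mul_add]
    omega

lemma evenCollapse_shiftedPsum_of_card_lt (hX : Odd X.offset ∨ Even l.sum) {j : ℕ}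
    (hj : l.card < j) : evenCollapse (shiftedPsum X l) j = shiftedPsum X l j := by
  obtain ⟨i, rfl⟩ := Nat.exists_eq_add_of_lt hj
  have h₀ := shiftedPsum_of_card_le X (show l.card ≤ l.card + i by omega)
  have h₁ := shiftedPsum_of_card_le X (show l.card ≤ l.card + i + 1 by omega)
  have h₂ := shiftedPsum_of_card_le X (show l.card ≤ l.card + i + 2 by omega)
  refine evenCollapse_succ_of_linear ?_ ?_
  · rw [h₀, h₁, h₂]
    ring
  · rw [h₀, h₁]
    rw [← Nat.not_even_iff_odd] at hX
    simp only [parity_simps]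
    tauto

lemma exists_isCollapse_shiftedPsum_eq (hX : Odd X.offset ∨ Even l.sum) :
    ∃ c, IsCollapse X l c ∧ shiftedPsum X c = evenCollapse (shiftedPsum X l) := by
  have hconc := shiftedPsum_discreteConcave X l
  have hslope : ∀ j, l.card + 1 ≤ j → evenCollapse (shiftedPsum X l) (j + 1) =
      evenCollapse (shiftedPsum X l) j + X.offset := fun j hj => by
    rw [evenCollapse_shiftedPsum_of_card_lt hX (by omega),
      evenCollapse_shiftedPsum_of_card_lt hX (by omega), shiftedPsum_of_card_le X (by omega),
      shiftedPsum_of_card_le X (by omega)]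
    ring
  obtain ⟨c, hc, hpsum⟩ := exists_isPartition_psum_eq hconc.evenCollapse
    (by simp [evenCollapse, shiftedPsum_zero]) hslope
  replace hpsum : shiftedPsum X c = evenCollapse (shiftedPsum X l) := funext hpsum
  have hsum : c.sum = l.sum := by
    have hlarge := congrFun hpsum (c.card + l.card + 1)
    rw [evenCollapse_shiftedPsum_of_card_lt hX (by omega), shiftedPsum_of_card_le X (by omega),
      shiftedPsum_of_card_le X (by omega)] at hlarge
    exact Nat.add_right_cancel hlarge
  refine ⟨c, ⟨?_, hsum, fun j => ?_, fun ν hν _ hdom j => ?_⟩, hpsum⟩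
  · rw [inP_iff_evenCorners hc, hpsum]
    exact evenCorners_evenCollapse hconc
  · rw [← shiftedPsum_le_iff (X := X), hpsum]
    exact evenCollapse_le hconc j
  · rw [← shiftedPsum_le_iff (X := X), hpsum]
    exact ((inP_iff_evenCorners hν.1).1 hν).le_evenCollapse (shiftedPsum_discreteConcave X ν)
      (by simp [shiftedPsum_zero]) (fun i => shiftedPsum_le_iff.2 (hdom i)) j

lemma collapseDefined_iff : CollapseDefined X l ↔ Odd X.offset ∨ Even l.sum := by
  constructor
  · rintro ⟨c, hc, hsum, -⟩
    rw [or_iff_not_imp_left, Nat.not_odd_iff_even]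
    intro hoffset
    have := even_sum_add_of_inP hc
    rwa [hsum, Nat.even_add, iff_true_right (hoffset.mul_right _)] at this
  · intro hX
    obtain ⟨c, hc, -⟩ := exists_isCollapse_shiftedPsum_eq hX
    exact ⟨c, hc⟩

lemma isCollapse_collapse (h : CollapseDefined X l) : IsCollapse X l (collapse X l) := by
  rw [collapse, dif_pos h]
  exact h.choose_spec

lemma IsCollapse.unique {c' : Ptn} (hc : IsCollapse X l c) (hc' : IsCollapse X l c') : c = c' :=
  Dom.antisymm hc.1.1 hc'.1.1 (hc'.2.2.2 c hc.1 hc.2.1 hc.2.2.1)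
    (hc.2.2.2 c' hc'.1 hc'.2.1 hc'.2.2.1)

lemma shiftedPsum_collapse (h : CollapseDefined X l) :
    shiftedPsum X (collapse X l) = evenCollapse (shiftedPsum X l) := by
  obtain ⟨c, hc, hpsum⟩ := exists_isCollapse_shiftedPsum_eq (collapseDefined_iff.1 h)
  rw [(isCollapse_collapse h).unique hc, hpsum]

end Collapse

/-! ### Collapse of a union -/

section Union

variable {X : PType} {k : ℕ} {l m : Ptn}

lemma collapse_eq_add {n : Ptn} (hn : CollapseDefined X n) (hsum : n.sum = l.sum + m.sum)
    (hcard : l.card ≤ k) (hk : Even (shiftedPsum X l k))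
    (hhalf : ∀ j, shiftedPsum X n j / 2 =
      concat k (shiftedPsum X l · / 2) (shiftedPsum X m · / 2) j)
    (hjoin : evenCollapse (shiftedPsum X n) k = 2 * (shiftedPsum X n k / 2)) :
    CollapseDefined X l ∧ CollapseDefined X m ∧ collapse X n = collapse X l + collapse X m := by
  have hl : CollapseDefined X l := by
    rw [shiftedPsum_of_card_le X hcard] at hk
    rw [collapseDefined_iff, ← Nat.not_even_iff_odd]
    simp only [parity_simps] at hk
    tauto
  have hm : CollapseDefined X m := by
    rw [collapseDefined_iff] at hn hl ⊢
    rw [hsum, Nat.even_add] at hn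
    tauto
  have hshifted : shiftedPsum X (collapse X n) =
      concat k (shiftedPsum X (collapse X l)) (shiftedPsum X (collapse X m)) := by
    rw [shiftedPsum_collapse hn, shiftedPsum_collapse hl, shiftedPsum_collapse hm]
    exact evenCollapse_eq_concat (shiftedPsum_discreteConcave X l) hk (shiftedPsum_zero X m)
      hhalf hjoin
  obtain ⟨hnP, hnsum, -⟩ := isCollapse_collapse hn
  obtain ⟨hlP, hlsum, -⟩ := isCollapse_collapse hl
  obtain ⟨hmP, hmsum, -⟩ := isCollapse_collapse hm
  refine ⟨hl, hm, eq_add_of_psum_eq_concat hnP.1 hlP.1 hmP.1 (by omega) (k := k) ?_⟩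
  funext j
  have hj := congrFun hshifted j
  have hoffset := concat_mul_left X.offset k j
  simp only [shiftedPsum, concat] at hj hoffset ⊢
  omega

lemma collapse_add_of_even (hsup : Superior l m) (heven : Even (l.sum + X.offset * l.card))
    (h : CollapseDefined X (l + m)) :
    CollapseDefined X l ∧ CollapseDefined X m ∧
      collapse X (l + m) = collapse X l + collapse X m := by
  have hconcat := shiftedPsum_add_of_superior X hsup
  rw [← shiftedPsum_of_card_le X le_rfl] at heven
  refine collapse_eq_add h (Multiset.sum_add l m) le_rfl heven (fun j => ?_) ?_
  · rw [hconcat, concat_div_two heven (shiftedPsum_zero X m)]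
  · have hk : Even (shiftedPsum X (l + m) l.card) := by
      rwa [hconcat, concat_of_le (shiftedPsum_zero X m) le_rfl]
    rw [evenCollapse_of_even (shiftedPsum_discreteConcave X _) hk, Nat.two_mul_div_two_of_even hk]

-- Moving a box across the corner at `k` produces the value `2⌊σ_k / 2⌋` of the collapse there.
lemma collapse_add_of_odd (hm : m ≠ 0) (hsup : Superior l (up m))
    (hodd : Odd (l.sum + X.offset * l.card)) (h : CollapseDefined X (l + m)) :
    CollapseDefined X (down l) ∧ CollapseDefined X (up m) ∧
      collapse X (l + m) = collapse X (down l) + collapse X (up m) := by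
  have hlt : maxPart m < minPart l := (maxPart_lt_maxPart_up m).trans_le hsup
  have hmin : 0 < minPart l := Nat.zero_lt_of_lt hlt
  have hdown := shiftedPsum_down X hmin
  have hsum : (l + m).sum = (down l).sum + (up m).sum := by
    rw [Multiset.sum_add, sum_up hm, ← sum_down hmin]
    ring
  have heven : Even (shiftedPsum X (down l) l.card) := by
    rwa [← shiftedPsum_of_card_le X le_rfl, ← hdown, if_pos le_rfl, Nat.odd_add_one,
      Nat.not_odd_iff_even] at hodd
  refine collapse_eq_add h hsum (card_down_le hmin) heven (fun j => ?_) ?_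
  · rw [shiftedPsum_add_of_superior X hlt.le]
    exact concat_div_two_of_move heven (shiftedPsum_zero X m) hdown (shiftedPsum_up X hm) j
  · have hheight : height (l + m) (minPart l) = l.card := by
      rw [height_add, height_eq_card fun _ hx => minPart_le hx,
        height_eq_zero fun _ hx => (le_maxPart hx).trans_lt hlt, add_zero]
    obtain ⟨i, hi⟩ := Nat.exists_eq_add_one.2
      (Multiset.card_pos_iff_exists_mem.2 ⟨_, minPart_mem hmin⟩)
    rw [hi] at hheight ⊢
    exact evenCollapse_succ_of_corner (shiftedPsum_corner_iff.2 ⟨_, hmin, hheight⟩)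

end Union

-- `badPart` agrees on `B` and `D`, and `IsCollapse` never mentions the parity of the sum.
lemma collapseDefined_D_eq_B : CollapseDefined .D = CollapseDefined .B := rfl

lemma collapse_D_eq_B : collapse .D = collapse .B := rfl

/-- Lemma 3.1 of the paper (the twelve union identities): collapses of a union
`μ = μ' ∪ μ''` in terms of collapses of the pieces. -/
theorem collapse_of_union (m1 m2 mu : Ptn) (k p : ℕ)
    (h1 : IsPartition m1) (h2 : IsPartition m2) (hne1 : m1 ≠ 0) (hne2 : m2 ≠ 0)
    (hmu : mu = m1 + m2) (hk : k = Multiset.card m1) (hp : p = m1.sum)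
    (hsup : Superior m1 m2) :
    -- k even, p even
    (Even k → Even p → CollapseDefined PType.B mu →
      CollapseDefined PType.D m1 ∧ CollapseDefined PType.B m2 ∧
      collapse PType.B mu = collapse PType.D m1 + collapse PType.B m2) ∧
    (Even k → Even p → CollapseDefined PType.C mu →
      CollapseDefined PType.C m1 ∧ CollapseDefined PType.C m2 ∧
      collapse PType.C mu = collapse PType.C m1 + collapse PType.C m2) ∧
    (Even k → Even p → CollapseDefined PType.D mu →
      CollapseDefined PType.D m1 ∧ CollapseDefined PType.D m2 ∧
      collapse PType.D mu = collapse PType.D m1 + collapse PType.D m2) ∧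
    -- k even, p odd
    (Even k → Odd p → Superior m1 (up m2) → CollapseDefined PType.B mu →
      CollapseDefined PType.D (down m1) ∧ CollapseDefined PType.B (up m2) ∧
      collapse PType.B mu = collapse PType.D (down m1) + collapse PType.B (up m2)) ∧
    (Even k → Odd p → Superior m1 (up m2) → CollapseDefined PType.C mu →
      CollapseDefined PType.C (down m1) ∧ CollapseDefined PType.C (up m2) ∧
      collapse PType.C mu = collapse PType.C (down m1) + collapse PType.C (up m2)) ∧
    (Even k → Odd p → Superior m1 (up m2) → CollapseDefined PType.D mu →
      CollapseDefined PType.D (down m1) ∧ CollapseDefined PType.D (up m2) ∧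
      collapse PType.D mu = collapse PType.D (down m1) + collapse PType.D (up m2)) ∧
    -- k odd, p even
    (Odd k → Even p → Superior m1 (up m2) → CollapseDefined PType.B mu →
      CollapseDefined PType.B (down m1) ∧ CollapseDefined PType.D (up m2) ∧
      collapse PType.B mu = collapse PType.B (down m1) + collapse PType.D (up m2)) ∧
    (Odd k → Even p → CollapseDefined PType.C mu →
      CollapseDefined PType.C m1 ∧ CollapseDefined PType.C m2 ∧
      collapse PType.C mu = collapse PType.C m1 + collapse PType.C m2) ∧
    (Odd k → Even p → Superior m1 (up m2) → CollapseDefined PType.D mu →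
      CollapseDefined PType.B (down m1) ∧ CollapseDefined PType.B (up m2) ∧
      collapse PType.D mu = collapse PType.B (down m1) + collapse PType.B (up m2)) ∧
    -- k odd, p odd
    (Odd k → Odd p → CollapseDefined PType.B mu →
      CollapseDefined PType.B m1 ∧ CollapseDefined PType.D m2 ∧
      collapse PType.B mu = collapse PType.B m1 + collapse PType.D m2) ∧
    (Odd k → Odd p → Superior m1 (up m2) → CollapseDefined PType.C mu →
      CollapseDefined PType.C (down m1) ∧ CollapseDefined PType.C (up m2) ∧
      collapse PType.C mu = collapse PType.C (down m1) + collapse PType.C (up m2)) ∧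
    (Odd k → Odd p → CollapseDefined PType.D mu →
      CollapseDefined PType.B m1 ∧ CollapseDefined PType.B m2 ∧
      collapse PType.D mu = collapse PType.B m1 + collapse PType.B m2) := by
  subst hmu hk hp
  rw [collapse_D_eq_B, collapseDefined_D_eq_B]
  have split {X : PType} := collapse_add_of_even (X := X) hsup
  have move {X : PType} := collapse_add_of_odd (X := X) (l := m1) hne2
  refine ⟨fun hk hp => split ?_, fun hk hp => split ?_, fun hk hp => split ?_,
    fun hk hp hs => move hs ?_, fun hk hp hs => move hs ?_, fun hk hp hs => move hs ?_,
    fun hk hp hs => move hs ?_, fun hk hp => split ?_, fun hk hp hs => move hs ?_,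
    fun hk hp => split ?_, fun hk hp hs => move hs ?_, fun hk hp => split ?_⟩
  all_goals
    simp only [PType.offset, Nat.even_iff, Nat.odd_iff] at hk hp ⊢
    omega

end NilDual
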